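/- arXiv:2012.11318 — 2 statements merged into one kernel-verified Lean document; each statement's English description precedes it below -/
import Mathlib

section
/- Fix an integer p ≥ 0. Suppose Q(b,j) is a polynomial in two variables with rational coefficients, of degree at most 2p+1 in b and at most p+1 in j, such that for all integers j > b ≥ 0 one has Σ_{k=b}^{j−1} C(2k+1+p, 2p+1)·C(2j−1, j+k) = C(2j−1, j+b)·Q(b,j), where C(n,m) denotes the binomial coefficient. Then the polynomial t ↦ Q(t·b, t²·j) (in the variable t, for real parameters b, j) has degree at most 2p+2, and its coefficient of t^{2p+2} equals 4^p · (p!/(2p+1)!) · Σ_{k=0}^{p} b^{2p−2k}·j^{k+1}/(p−k)!. -/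
/-!
Put `F(X, Y) = ∑ qₙ(X) Yⁿ` for the polynomial `Q(b, j)` with `b = X`, `j = Y`, and let
`f(b) = C(2b+1+p, 2p+1)`, a polynomial of degree `2p+1` with leading coefficient
`2^(2p+1)/(2p+1)!`. Subtracting the hypotheses at `b` and `b+1`, and using
`C(2j-1, j+b+1)·(j+b+1) = C(2j-1, j+b)·(j-b-1)`, gives

`(j+b+1)·Q(b,j) - (j-b-1)·Q(b+1,j) = (j+b+1)·f(b)`

for all naturals `b < j`, hence as an identity of polynomials. Comparing coefficients of `jⁿ`,
and writing `τq = q(X+1)`,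

`(X+1)(qₙ + τqₙ) = (τqₙ₋₁ - qₙ₋₁) + [n = 1] f + [n = 0] (X+1) f`.

The operator `q ↦ (X+1)(q + τq)` raises the degree by exactly one and doubles the leading
coefficient, while `q ↦ τq - q` differentiates to leading order. So, by induction on `n`,
`deg q₀ ≤ 2p+1`, and for `n = k+1` one has `deg qₙ ≤ 2p-2k` (with `qₙ = 0` if this is negative)
with coefficient `4^p·p!/((2p+1)!·(p-k)!)` in degree `2p-2k` (`coeff_succ`). Under
`b ↦ t b`, `j ↦ t² j` the monomial `b^m j^n` gets weight `m + 2n`, so these are exactly the terms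
of top weight `2p+2`.
-/

noncomputable section

open Polynomial

namespace BinomialSum

/-- The coefficients of `q(X+1)` in the top two degrees. -/
lemma coeff_shift {q : ℚ[X]} {m : ℕ} (h : q.natDegree ≤ m + 1) :
    (q.comp (X + 1)).coeff m = q.coeff m + (m + 1) * q.coeff (m + 1) := by
  rw [comp, eval₂_eq_sum_range' C (n := m + 2) (by omega)]
  simp only [finsetSum_coeff, coeff_C_mul, coeff_X_add_one_pow]
  rw [Finset.sum_range_succ, Finset.sum_range_succ, Finset.sum_eq_zero]
  · simp; ring
  · intro i hi
    rw [Nat.choose_eq_zero_of_lt (Finset.mem_range.1 hi)]; simp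

lemma coeff_avg {q : ℚ[X]} {m : ℕ} (h : q.natDegree ≤ m) :
    ((X + 1) * (q + q.comp (X + 1))).coeff (m + 1) = 2 * q.coeff m := by
  have h1 := coeff_shift (q := q) (m := m) (by omega)
  have h2 := coeff_shift (q := q) (m := m + 1) (by omega)
  have e1 : q.coeff (m + 1) = 0 := coeff_eq_zero_of_natDegree_lt (by omega)
  have e2 : q.coeff (m + 1 + 1) = 0 := coeff_eq_zero_of_natDegree_lt (by omega)
  rw [add_mul, one_mul, coeff_add, coeff_X_mul, coeff_add, coeff_add, h1, h2, e1, e2]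
  ring

/-- `q ↦ (X+1)(q + q(X+1))` raises the degree by one, so degree bounds can be pulled back. -/
lemma coeff_eq_zero_of_avg {q : ℚ[X]} {K : ℕ}
    (h : ∀ m, K ≤ m → ((X + 1) * (q + q.comp (X + 1))).coeff (m + 1) = 0) :
    ∀ m, K ≤ m → q.coeff m = 0 := by
  intro m hm
  by_cases hd : q.natDegree < K
  · exact coeff_eq_zero_of_natDegree_lt (by omega)
  have h1 := h q.natDegree (by omega)
  rw [coeff_avg le_rfl] at h1
  have h2 : q.leadingCoeff = 0 := by simpa using h1
  rw [leadingCoeff_eq_zero.1 h2]; simp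

lemma coeff_diff {q : ℚ[X]} {m : ℕ} (h : q.natDegree ≤ m + 1) :
    (q.comp (X + 1) - q).coeff m = (m + 1) * q.coeff (m + 1) := by
  rw [coeff_sub, coeff_shift h]; ring

/-- The polynomial in `b` whose value at every natural `b` is `C(2b+1+p, 2p+1)`. -/
def chooseP (p : ℕ) : ℚ[X] :=
  C (((2 * p + 1).factorial : ℚ)⁻¹) *
    (descPochhammer ℚ (2 * p + 1)).comp (C 2 * X + C (1 + p : ℚ))

lemma eval_chooseP (p b : ℕ) :
    (chooseP p).eval (b : ℚ) = ((2 * b + 1 + p).choose (2 * p + 1) : ℚ) := by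
  have h : (2 * (b : ℚ) + (1 + p)) = ((2 * b + 1 + p : ℕ) : ℚ) := by push_cast; ring
  simp only [chooseP, eval_mul, eval_C, eval_comp, eval_add, eval_X]
  rw [h, descPochhammer_eval_eq_descFactorial, Nat.descFactorial_eq_factorial_mul_choose]
  have := Nat.factorial_ne_zero (2 * p + 1)
  push_cast
  field_simp

lemma natDegree_chooseP_le (p : ℕ) : (chooseP p).natDegree ≤ 2 * p + 1 := by
  refine (natDegree_C_mul_le _ _).trans ?_
  rw [natDegree_comp, natDegree_linear two_ne_zero, descPochhammer_natDegree, mul_one]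

lemma coeff_chooseP (p : ℕ) :
    (chooseP p).coeff (2 * p + 1) = 2 ^ (2 * p + 1) / ((2 * p + 1).factorial : ℚ) := by
  have h1 : ((descPochhammer ℚ (2 * p + 1)).comp (C 2 * X + C (1 + p : ℚ))).natDegree
      = 2 * p + 1 := by
    rw [natDegree_comp, natDegree_linear two_ne_zero, descPochhammer_natDegree, mul_one]
  have h2 := leadingCoeff_comp (p := descPochhammer ℚ (2 * p + 1))
    (q := C 2 * X + C (1 + p : ℚ)) (by rw [natDegree_linear two_ne_zero]; exact one_ne_zero)
  rw [leadingCoeff, h1, (monic_descPochhammer ℚ _).leadingCoeff, leadingCoeff_linear two_ne_zero,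
    descPochhammer_natDegree, one_mul] at h2
  rw [chooseP, coeff_C_mul, h2]
  ring

/-- `Q` regarded as a polynomial in `j` whose coefficients are polynomials in `b`. -/
def toBi (Q : MvPolynomial (Fin 2) ℚ) : ℚ[X][X] :=
  MvPolynomial.aeval (fun i : Fin 2 => if i = 0 then C X else X) Q

lemma eval_toBi (Q : MvPolynomial (Fin 2) ℚ) (b j : ℚ) :
    ((toBi Q).map (evalRingHom b)).eval j
      = MvPolynomial.eval (fun i : Fin 2 => if i = 0 then b else j) Q := by
  rw [toBi]
  induction Q using MvPolynomial.induction_on with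
  | C a => simp [Polynomial.algebraMap_apply]
  | add P R hP hR => simp [hP, hR]
  | mul_X P i hP => fin_cases i <;> simp [hP]

/-- A bivariate polynomial vanishing at all naturals `b < j` is zero. -/
lemma eq_zero_of_vanish {E : ℚ[X][X]}
    (h : ∀ b j : ℕ, b < j → (E.map (evalRingHom (b : ℚ))).eval (j : ℚ) = 0) : E = 0 := by
  have h1 : ∀ b : ℕ, E.map (evalRingHom (b : ℚ)) = 0 := by
    intro b
    refine eq_zero_of_infinite_isRoot _ (Set.Infinite.mono ?_
      ((Set.Ioi_infinite b).image (f := fun n : ℕ => (n : ℚ)) Nat.cast_injective.injOn))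
    rintro _ ⟨j, hj, rfl⟩
    exact h b j hj
  ext1 n
  refine eq_zero_of_infinite_isRoot _ (Set.Infinite.mono ?_
    (Set.infinite_range_of_injective (f := fun n : ℕ => (n : ℚ)) Nat.cast_injective))
  rintro _ ⟨b, rfl⟩
  have := congrArg (fun P => P.coeff n) (h1 b)
  simpa using this

/-- The difference equation in `b`, obtained by telescoping the sum, at naturals `b < j`. -/
lemma telescope {p : ℕ} {q : ℕ → ℕ → ℚ}
    (hQ : ∀ b j : ℕ, b < j →
      (∑ k ∈ Finset.Ico b j,
          ((2 * k + 1 + p).choose (2 * p + 1) : ℚ) * ((2 * j - 1).choose (j + k) : ℚ))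
        = ((2 * j - 1).choose (j + b) : ℚ) * q b j) {b j : ℕ} (h : b < j) :
    ((j : ℚ) + (b + 1)) * q b j - (j - (b + 1)) * q (b + 1) j
      = (j + (b + 1)) * ((2 * b + 1 + p).choose (2 * p + 1) : ℚ) := by
  have hc : ((2 * j - 1).choose (j + b) : ℚ) ≠ 0 := by
    have := Nat.choose_pos (n := 2 * j - 1) (k := j + b) (by omega)
    positivity
  have h0 := hQ b j h
  rw [Finset.sum_eq_sum_Ico_succ_bot h] at h0
  have hr : ((2 * j - 1).choose (j + b + 1) : ℚ) * (j + b + 1)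
      = ((2 * j - 1).choose (j + b) : ℚ) * (j - (b + 1)) := by
    have := Nat.choose_succ_right_eq (2 * j - 1) (j + b)
    have e : 2 * j - 1 - (j + b) = j - (b + 1) := by omega
    rw [e] at this
    have h3 := congrArg (Nat.cast : ℕ → ℚ) this
    rw [Nat.cast_mul, Nat.cast_mul, Nat.cast_sub (by omega : b + 1 ≤ j)] at h3
    push_cast at h3
    exact h3
  -- for `b + 1 = j` the remaining sum is empty and the factor `j - (b + 1)` vanishes
  have h1 : (∑ k ∈ Finset.Ico (b + 1) j,
      ((2 * k + 1 + p).choose (2 * p + 1) : ℚ) * ((2 * j - 1).choose (j + k) : ℚ))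
        = ((2 * j - 1).choose (j + b + 1) : ℚ) * q (b + 1) j := by
    rcases Nat.lt_or_ge (b + 1) j with hlt | hge
    · exact hQ (b + 1) j hlt
    · rw [Finset.Ico_eq_empty (by omega), Nat.choose_eq_zero_of_lt (by omega)]; simp
  rw [h1] at h0
  apply mul_left_cancel₀ hc
  linear_combination (-(j + b + 1 : ℚ)) * h0 + q (b + 1) j * hr

/-- The difference equation as an identity of bivariate polynomials. -/
lemma functional_eq {p : ℕ} {Q : MvPolynomial (Fin 2) ℚ}
    (hQ : ∀ b j : ℕ, b < j →
      (∑ k ∈ Finset.Ico b j,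
          ((2 * k + 1 + p).choose (2 * p + 1) : ℚ) * ((2 * j - 1).choose (j + k) : ℚ))
        = ((2 * j - 1).choose (j + b) : ℚ) *
            MvPolynomial.eval (fun i : Fin 2 => if i = 0 then (b : ℚ) else (j : ℚ)) Q) :
    (X + C (X + 1)) * toBi Q - (X - C (X + 1)) * (toBi Q).map (compRingHom (X + 1))
      = (X + C (X + 1)) * C (chooseP p) := by
  rw [← sub_eq_zero]
  apply eq_zero_of_vanish
  intro b j hbj
  have h := telescope (q := fun b j => MvPolynomial.eval
    (fun i : Fin 2 => if i = 0 then (b : ℚ) else (j : ℚ)) Q) hQ hbj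
  have hc : (evalRingHom (b : ℚ)).comp (compRingHom (X + 1)) = evalRingHom ((b + 1 : ℕ) : ℚ) := by
    ext <;> simp
  simp only [Polynomial.map_sub, Polynomial.map_mul, Polynomial.map_add, Polynomial.map_map, hc,
    map_X, map_C, eval_sub, eval_mul, eval_add, eval_X, eval_C, eval_toBi, coe_evalRingHom,
    eval_one, eval_chooseP]
  rw [h, sub_self]

section Recursion

variable {p : ℕ} {F : ℚ[X][X]}

lemma rec_zero
    (hF : (X + C (X + 1)) * F - (X - C (X + 1)) * F.map (compRingHom (X + 1))
      = (X + C (X + 1)) * C (chooseP p)) :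
    (X + 1) * (F.coeff 0 + (F.coeff 0).comp (X + 1)) = (X + 1) * chooseP p := by
  have h := congrArg (fun P => P.coeff 0) hF
  simp only [add_mul, sub_mul, coeff_sub, coeff_add, coeff_X_mul_zero, coeff_C_mul, coeff_map,
    coe_compRingHom_apply, coeff_C_zero] at h
  linear_combination h

lemma rec_succ
    (hF : (X + C (X + 1)) * F - (X - C (X + 1)) * F.map (compRingHom (X + 1))
      = (X + C (X + 1)) * C (chooseP p)) (n : ℕ) :
    (X + 1) * (F.coeff (n + 1) + (F.coeff (n + 1)).comp (X + 1))
      = ((F.coeff n).comp (X + 1) - F.coeff n) + if n = 0 then chooseP p else 0 := by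
  have h := congrArg (fun P => P.coeff (n + 1)) hF
  simp only [add_mul, sub_mul, coeff_sub, coeff_add, coeff_X_mul, coeff_C_mul, coeff_map,
    coe_compRingHom_apply, coeff_C_succ, coeff_C] at h
  linear_combination h

lemma natDegree_coeff_zero
    (hF : (X + C (X + 1)) * F - (X - C (X + 1)) * F.map (compRingHom (X + 1))
      = (X + C (X + 1)) * C (chooseP p)) : (F.coeff 0).natDegree ≤ 2 * p + 1 := by
  rw [natDegree_le_iff_coeff_eq_zero]
  refine coeff_eq_zero_of_avg (K := 2 * p + 2) fun m hm => ?_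
  have := natDegree_chooseP_le p
  rw [rec_zero hF, add_mul, one_mul, coeff_add, coeff_X_mul,
    coeff_eq_zero_of_natDegree_lt (by omega), coeff_eq_zero_of_natDegree_lt (by omega), add_zero]

/-- The terms of `F` of positive degree in `Y` and of weight at least `2p+2`, where `X` has weight
`1` and `Y` weight `2`. -/
lemma coeff_succ
    (hF : (X + C (X + 1)) * F - (X - C (X + 1)) * F.map (compRingHom (X + 1))
      = (X + C (X + 1)) * C (chooseP p)) (k : ℕ) :
    (∀ m, 2 * p + 1 ≤ m + 2 * k → (F.coeff (k + 1)).coeff m = 0) ∧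
    (∀ m, m + 2 * k = 2 * p → (F.coeff (k + 1)).coeff m
      = 4 ^ p * (p.factorial / (2 * p + 1).factorial) / (p - k).factorial) := by
  induction k with
  | zero =>
    have h0 := natDegree_coeff_zero hF
    have hr := rec_succ hF 0
    have hd := natDegree_chooseP_le p
    have hc : ∀ m, 2 * p ≤ m → ((X + 1) * (F.coeff (0 + 1)
        + (F.coeff (0 + 1)).comp (X + 1))).coeff (m + 1) = (chooseP p).coeff (m + 1) := by
      intro m hm
      rw [hr, if_pos rfl, coeff_add, coeff_diff (by omega),
        coeff_eq_zero_of_natDegree_lt (by omega : (F.coeff 0).natDegree < m + 1 + 1)]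
      ring
    have hv := coeff_eq_zero_of_avg (q := F.coeff (0 + 1)) (K := 2 * p + 1) fun m hm => by
      rw [hc m (by omega), coeff_eq_zero_of_natDegree_lt (by omega)]
    refine ⟨fun m hm => hv m (by omega), fun m hm => ?_⟩
    obtain rfl : m = 2 * p := by omega
    have h2 := hc (2 * p) le_rfl
    rw [coeff_avg (natDegree_le_iff_coeff_eq_zero.2 fun i hi => hv i hi), coeff_chooseP,
      pow_succ, pow_mul, show (2 : ℚ) ^ 2 = 4 by norm_num] at h2
    have := Nat.factorial_ne_zero p
    have := Nat.factorial_ne_zero (2 * p + 1)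
    rw [Nat.sub_zero]
    field_simp at h2 ⊢
    linarith
  | succ k ih =>
    obtain ⟨ihv, ihc⟩ := ih
    have hr := rec_succ hF (k + 1)
    rw [if_neg (Nat.succ_ne_zero k), add_zero] at hr
    have hc : ∀ m, 2 * p ≤ m + 2 * (k + 1) → ((X + 1) * (F.coeff (k + 1 + 1)
        + (F.coeff (k + 1 + 1)).comp (X + 1))).coeff (m + 1)
          = (m + 2) * (F.coeff (k + 1)).coeff (m + 2) := by
      intro m hm
      rw [hr, coeff_diff (natDegree_le_iff_coeff_eq_zero.2 fun i hi => ihv i (by omega))]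
      push_cast
      ring
    have hv := coeff_eq_zero_of_avg (q := F.coeff (k + 1 + 1)) (K := 2 * p + 1 - 2 * (k + 1))
      fun m hm => by rw [hc m (by omega), ihv _ (by omega), mul_zero]
    refine ⟨fun m hm => hv m (by omega), fun m hm => ?_⟩
    have h2 := hc m (by omega)
    rw [coeff_avg (natDegree_le_iff_coeff_eq_zero.2 fun i hi => hv i (by omega)),
      ihc (m + 2) (by omega)] at h2
    obtain ⟨d, rfl⟩ : ∃ d, p = k + 1 + d := ⟨p - (k + 1), by omega⟩
    obtain rfl : m = 2 * d := by omega
    have e1 : k + 1 + d - k = d + 1 := by omega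
    have e2 : k + 1 + d - (k + 1) = d := by omega
    rw [e1, Nat.factorial_succ d] at h2
    rw [e2]
    have := Nat.factorial_ne_zero d
    have := Nat.factorial_ne_zero (2 * (k + 1 + d) + 1)
    push_cast at h2 ⊢
    have hd : (d : ℚ) + 1 ≠ 0 := by positivity
    field_simp at h2 ⊢
    linarith

end Recursion

lemma aeval_eq_toBi (Q : MvPolynomial (Fin 2) ℚ) (b j : ℝ) :
    (MvPolynomial.aeval (fun i : Fin 2 => if i = 0 then C b * X else C j * X ^ 2) Q : ℝ[X])
      = (toBi Q).eval₂ (aeval (C b * X : ℝ[X]) : ℚ[X] →ₐ[ℚ] ℝ[X]).toRingHom (C j * X ^ 2) := by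
  rw [toBi]
  induction Q using MvPolynomial.induction_on with
  | C a => simp [Polynomial.algebraMap_apply]
  | add P R hP hR => simp [hP, hR, eval₂_add]
  | mul_X P i hP => fin_cases i <;> simp [hP, eval₂_mul]

lemma coeff_aeval_scale (q : ℚ[X]) (b : ℝ) (m : ℕ) :
    (aeval (C b * X : ℝ[X]) q).coeff m = q.coeff m * b ^ m := by
  induction q using Polynomial.induction_on' with
  | add P R hP hR => simp [hP, hR, add_mul]
  | monomial n a =>
    rw [aeval_monomial, mul_pow, ← C_pow, Polynomial.algebraMap_apply, ← mul_assoc, ← C_mul,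
      coeff_C_mul_X_pow, coeff_monomial]
    by_cases h : m = n
    · subst h; simp
    · simp [h, Ne.symm h]

/-- The coefficient of `t^d` in `Q(t b, t² j)` collects the monomials of weight `d`. -/
lemma coeff_scaled {Q : MvPolynomial (Fin 2) ℚ} {N : ℕ} (hN : (toBi Q).natDegree < N)
    (b j : ℝ) (d : ℕ) :
    (MvPolynomial.aeval (fun i : Fin 2 => if i = 0 then C b * X else C j * X ^ 2) Q : ℝ[X]).coeff d
      = ∑ n ∈ Finset.range N, if 2 * n ≤ d then
          (((toBi Q).coeff n).coeff (d - 2 * n) : ℝ) * b ^ (d - 2 * n) * j ^ n else 0 := by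
  rw [aeval_eq_toBi, eval₂_eq_sum_range' _ hN, finsetSum_coeff]
  refine Finset.sum_congr rfl fun n _ => ?_
  rw [mul_pow, ← C_pow, ← pow_mul, ← mul_assoc, coeff_mul_X_pow']
  refine if_congr Iff.rfl ?_ rfl
  rw [coeff_mul_C]
  exact congrArg (· * j ^ n) (coeff_aeval_scale _ _ _)

end BinomialSum

/-- fix `p ≥ 0`.  If `Q(b,j)` is a two-variable polynomial with rational
coefficients, of degree at most `2p+1` in `b` and at most `p+1` in `j`, satisfying
`Σ_{k=b}^{j−1} C(2k+1+p,2p+1)·C(2j−1,j+k) = C(2j−1,j+b)·Q(b,j)` for all integers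
`j > b ≥ 0`, then for all real `b`, `j` the polynomial `t ↦ Q(t·b, t²·j)` has degree at
most `2p+2` and its coefficient of `t^{2p+2}` equals
`4^p·(p!/(2p+1)!)·Σ_{k=0}^{p} b^{2p−2k}·j^{k+1}/(p−k)!`.
(The variable of index `0` of `Q` is `b` and that of index `1` is `j`.) -/
theorem stmt8 (p : ℕ) (Q : MvPolynomial (Fin 2) ℚ)
    (hdegb : Q.degreeOf 0 ≤ 2 * p + 1)
    (hdegj : Q.degreeOf 1 ≤ p + 1)
    (hQ : ∀ b j : ℕ, b < j →
      (∑ k ∈ Finset.Ico b j,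
          ((2 * k + 1 + p).choose (2 * p + 1) : ℚ) * ((2 * j - 1).choose (j + k) : ℚ))
        = ((2 * j - 1).choose (j + b) : ℚ) *
            MvPolynomial.eval (fun i : Fin 2 => if i = 0 then (b : ℚ) else (j : ℚ)) Q) :
    ∀ b j : ℝ,
      (MvPolynomial.aeval
          (fun i : Fin 2 => if i = 0 then Polynomial.C b * Polynomial.X
            else Polynomial.C j * Polynomial.X ^ 2) Q : Polynomial ℝ).natDegree
        ≤ 2 * p + 2 ∧
      (MvPolynomial.aeval
          (fun i : Fin 2 => if i = 0 then Polynomial.C b * Polynomial.X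
            else Polynomial.C j * Polynomial.X ^ 2) Q : Polynomial ℝ).coeff (2 * p + 2)
        = 4 ^ p * ((p.factorial : ℝ) / ((2 * p + 1).factorial : ℝ)) *
            ∑ k ∈ Finset.range (p + 1),
              b ^ (2 * p - 2 * k) * j ^ (k + 1) / ((p - k).factorial : ℝ) := by
  intro b j
  have hF := BinomialSum.functional_eq hQ
  have h0 := BinomialSum.natDegree_coeff_zero hF
  have hk := BinomialSum.coeff_succ hF
  have hN : (BinomialSum.toBi Q).natDegree < p + 2 := by
    rw [Nat.lt_succ_iff, natDegree_le_iff_coeff_eq_zero]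
    intro n hn
    obtain ⟨k, rfl⟩ : ∃ k, n = k + 1 := ⟨n - 1, by omega⟩
    ext m
    rw [(hk k).1 m (by omega), coeff_zero]
  constructor
  · rw [natDegree_le_iff_coeff_eq_zero]
    intro d hd
    rw [BinomialSum.coeff_scaled hN]
    refine Finset.sum_eq_zero fun n _ => ?_
    split_ifs with hnd
    · rcases n with _ | k
      · rw [coeff_eq_zero_of_natDegree_lt (by omega)]; simp
      · rw [(hk k).1 _ (by omega)]; simp
    · rfl
  · rw [BinomialSum.coeff_scaled hN, Finset.sum_range_succ', Finset.mul_sum]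
    rw [coeff_eq_zero_of_natDegree_lt (by omega : _ < 2 * p + 2 - 2 * 0)]
    simp only [Rat.cast_zero, zero_mul, ite_self, add_zero]
    refine Finset.sum_congr rfl fun k hkp => ?_
    have hkp := Finset.mem_range.1 hkp
    have e : 2 * p + 2 - 2 * (k + 1) = 2 * p - 2 * k := by omega
    rw [if_pos (by omega), e, (hk k).2 _ (by omega)]
    push_cast
    ring

end
end

section
/- Fix an integer p ≥ 0 and real numbers x > 0 and y > 0. Let (b_m), (j_m), (k_m) be sequences of positive integers such that b_m → ∞, j_m/b_m² → x, and k_m/b_m → y as m → ∞ (so in particular k_m ≤ j_m − 1 for all large m). Then b_m^{−(2p+1)} · C(2k_m+1+p, 2p+1) · C(2j_m−1, j_m+k_m) / C(2j_m−1, j_m+b_m) converges to (2^{2p+1}/(2p+1)!) · y^{2p+1} · e^{(1−y²)/x} as m → ∞. -/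
/-!
Write `R(j, k) = C(2j-1, j+k) / C(2j-1, j) = ∏_{i=1}^{k} (j-i)/(j+i)`. For `i ≤ k < j` the inequality
`1 + u ≤ exp u` gives `exp (-2i/(j-k)) ≤ (j-i)/(j+i) ≤ exp (-2i/(j+k))`, so
`exp (-k(k+1)/(j-k)) ≤ R(j, k) ≤ exp (-k(k+1)/(j+k))`. In the regime `j/b² → x`, `k/b → y`, `b → ∞`
both exponents tend to `-y²/x`, hence `R(j, k) → exp (-y²/x)` (`tendsto_choose_ratio`).
The quotient in the theorem is `R(j, k) / R(j, b)`, with limit `exp (-y²/x) / exp (-1/x)`, times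
the polynomial factor `b^{-(2p+1)} C(2k+1+p, 2p+1)`, whose limit is `(2y)^{2p+1}/(2p+1)!`
because `C(n, r) ~ n^r / r!`.
-/

open Filter

lemma choose_step (j k : ℕ) (hk : k + 1 < j) :
    ((2 * j - 1).choose (j + (k + 1)) : ℝ) * (j + k + 1) =
      ((2 * j - 1).choose (j + k) : ℝ) * (j - k - 1) := by
  have h := Nat.choose_succ_right_eq (2 * j - 1) (j + k)
  have e : 2 * j - 1 - (j + k) = j - (k + 1) := by omega
  rw [e] at h
  have h' := congrArg (fun n : ℕ => (n : ℝ)) h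
  push_cast [Nat.cast_sub hk.le] at h'
  rw [← add_assoc]
  linarith

/-- The bound `K` on the index stays fixed during the induction on `k`; it is used with `K = k`. -/
lemma choose_le_exp (j K k : ℕ) (hK : K < j) (hk : k ≤ K) :
    ((2 * j - 1).choose (j + k) : ℝ) ≤
      ((2 * j - 1).choose j : ℝ) * Real.exp (-((k : ℝ) * (k + 1) / (j + K))) := by
  induction k with
  | zero => simp
  | succ k ih =>
    have ih := ih (by omega)
    have hs := choose_step j k (by omega)
    have hkK : (k : ℝ) + 1 ≤ K := by exact_mod_cast hk
    have hKj : (K : ℝ) < j := by exact_mod_cast hK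
    have hk0 : (0 : ℝ) ≤ k := k.cast_nonneg
    have hpos : (0 : ℝ) < j + k + 1 := by linarith
    have hfac : ((j : ℝ) - k - 1) / (j + k + 1) ≤ Real.exp (-(2 * (k + 1) / (j + K))) := by
      calc ((j : ℝ) - k - 1) / (j + k + 1) = -(2 * (k + 1) / (j + k + 1)) + 1 := by
            field_simp; ring
        _ ≤ Real.exp (-(2 * (k + 1) / (j + k + 1))) := Real.add_one_le_exp _
        _ ≤ _ := by
            apply Real.exp_le_exp.2
            apply neg_le_neg
            apply div_le_div_of_nonneg_left <;> linarith
    have hfac0 : 0 ≤ ((j : ℝ) - k - 1) / (j + k + 1) := div_nonneg (by linarith) hpos.le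
    calc ((2 * j - 1).choose (j + (k + 1)) : ℝ)
        = ((2 * j - 1).choose (j + k) : ℝ) * (((j : ℝ) - k - 1) / (j + k + 1)) := by
          rw [← mul_div_assoc, ← hs]; field_simp
      _ ≤ (((2 * j - 1).choose j : ℝ) * Real.exp (-((k : ℝ) * (k + 1) / (j + K)))) *
            Real.exp (-(2 * (k + 1) / (j + K))) := by
          gcongr
      _ = _ := by
          rw [mul_assoc, ← Real.exp_add]
          congr 2
          push_cast
          ring

/-- The bound `K` on the index stays fixed during the induction on `k`; it is used with `K = k`. -/
lemma exp_le_choose (j K k : ℕ) (hK : K < j) (hk : k ≤ K) :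
    ((2 * j - 1).choose j : ℝ) * Real.exp (-((k : ℝ) * (k + 1) / (j - K))) ≤
      ((2 * j - 1).choose (j + k) : ℝ) := by
  induction k with
  | zero => simp
  | succ k ih =>
    have ih := ih (by omega)
    have hs := choose_step j k (by omega)
    have hkK : (k : ℝ) + 1 ≤ K := by exact_mod_cast hk
    have hKj : (K : ℝ) < j := by exact_mod_cast hK
    have hk0 : (0 : ℝ) ≤ k := k.cast_nonneg
    have hpos : (0 : ℝ) < j + k + 1 := by linarith
    have hpos' : (0 : ℝ) < j - k - 1 := by linarith
    have hfac : Real.exp (-(2 * (k + 1) / (j - K))) ≤ ((j : ℝ) - k - 1) / (j + k + 1) := by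
      rw [Real.exp_neg, ← inv_div ((j : ℝ) + k + 1)]
      apply inv_anti₀ (div_pos hpos hpos')
      calc ((j : ℝ) + k + 1) / (j - k - 1) = 2 * (k + 1) / (j - k - 1) + 1 := by
            field_simp; ring
        _ ≤ Real.exp (2 * (k + 1) / (j - k - 1)) := Real.add_one_le_exp _
        _ ≤ _ := by
            apply Real.exp_le_exp.2
            apply div_le_div_of_nonneg_left <;> linarith
    calc ((2 * j - 1).choose j : ℝ) *
          Real.exp (-(((k + 1 : ℕ) : ℝ) * ((k + 1 : ℕ) + 1) / (j - K)))
        = (((2 * j - 1).choose j : ℝ) * Real.exp (-((k : ℝ) * (k + 1) / (j - K)))) *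
            Real.exp (-(2 * (k + 1) / (j - K))) := by
          rw [mul_assoc, ← Real.exp_add]
          congr 2
          push_cast
          ring
      _ ≤ ((2 * j - 1).choose (j + k) : ℝ) * (((j : ℝ) - k - 1) / (j + k + 1)) := by
          gcongr
      _ = _ := by
          rw [← mul_div_assoc, ← hs]; field_simp

lemma eventually_lt_of_scaling (x y : ℝ) (hx : 0 < x) (b j k : ℕ → ℕ) (hb : ∀ m, 0 < b m)
    (hbtop : Tendsto (fun m => (b m : ℝ)) atTop atTop)
    (hjx : Tendsto (fun m => (j m : ℝ) / (b m : ℝ) ^ 2) atTop (nhds x))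
    (hky : Tendsto (fun m => (k m : ℝ) / (b m : ℝ)) atTop (nhds y)) :
    ∀ᶠ m in atTop, k m < j m := by
  have h0 := hky.mul (tendsto_inv_atTop_zero.comp hbtop)
  rw [mul_zero] at h0
  filter_upwards [h0.eventually_lt hjx hx] with m hm
  have hbm : (0 : ℝ) < b m := by exact_mod_cast hb m
  have e : (k m : ℝ) / b m * ((fun r : ℝ => r⁻¹) ∘ fun m => (b m : ℝ)) m = k m / (b m : ℝ) ^ 2 := by
    simp only [Function.comp]; field_simp
  rw [e, div_lt_div_iff_of_pos_right (by positivity)] at hm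
  exact_mod_cast hm

/-- Gaussian limit of the central binomial ratio in the scaling window `k ≈ y b`, `j ≈ x b²`. -/
lemma tendsto_choose_ratio (x y : ℝ) (hx : 0 < x) (b j k : ℕ → ℕ) (hb : ∀ m, 0 < b m)
    (hbtop : Tendsto (fun m => (b m : ℝ)) atTop atTop)
    (hjx : Tendsto (fun m => (j m : ℝ) / (b m : ℝ) ^ 2) atTop (nhds x))
    (hky : Tendsto (fun m => (k m : ℝ) / (b m : ℝ)) atTop (nhds y)) :
    Tendsto (fun m => ((2 * j m - 1).choose (j m + k m) : ℝ) / ((2 * j m - 1).choose (j m) : ℝ))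
      atTop (nhds (Real.exp (-(y ^ 2 / x)))) := by
  have hinv : Tendsto (fun m => ((b m : ℝ))⁻¹) atTop (nhds 0) := tendsto_inv_atTop_zero.comp hbtop
  have hnum : Tendsto (fun m => (k m : ℝ) / b m * (k m / b m + (b m : ℝ)⁻¹)) atTop
      (nhds (y ^ 2)) := by
    have h := hky.mul (hky.add hinv)
    rwa [add_zero, ← sq] at h
  have hkinv : Tendsto (fun m => (k m : ℝ) / b m * (b m : ℝ)⁻¹) atTop (nhds 0) := by
    simpa using hky.mul hinv
  have hup : Tendsto (fun m => Real.exp (-((k m : ℝ) * (k m + 1) / (j m + k m)))) atTop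
      (nhds (Real.exp (-(y ^ 2 / x)))) := by
    have hden := hjx.add hkinv
    rw [add_zero] at hden
    refine (Real.continuous_exp.tendsto _).comp ((hnum.div hden hx.ne').neg.congr fun m => ?_)
    have hbm : (b m : ℝ) ≠ 0 := by exact_mod_cast (hb m).ne'
    simp only [Pi.div_apply]
    field_simp
  have hlo : Tendsto (fun m => Real.exp (-((k m : ℝ) * (k m + 1) / (j m - k m)))) atTop
      (nhds (Real.exp (-(y ^ 2 / x)))) := by
    have hden := hjx.sub hkinv
    rw [sub_zero] at hden
    refine (Real.continuous_exp.tendsto _).comp ((hnum.div hden hx.ne').neg.congr fun m => ?_)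
    have hbm : (b m : ℝ) ≠ 0 := by exact_mod_cast (hb m).ne'
    simp only [Pi.div_apply]
    field_simp
  have hlt := eventually_lt_of_scaling x y hx b j k hb hbtop hjx hky
  refine tendsto_of_tendsto_of_tendsto_of_le_of_le' hlo hup ?_ ?_
  · filter_upwards [hlt] with m hm
    have hc : (0 : ℝ) < (2 * j m - 1).choose (j m) := by
      exact_mod_cast Nat.choose_pos (by omega)
    rw [le_div_iff₀ hc, mul_comm (Real.exp _)]
    exact exp_le_choose _ _ _ hm le_rfl
  · filter_upwards [hlt] with m hm
    have hc : (0 : ℝ) < (2 * j m - 1).choose (j m) := by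
      exact_mod_cast Nat.choose_pos (by omega)
    rw [div_le_iff₀ hc, mul_comm (Real.exp _)]
    exact choose_le_exp _ _ _ hm le_rfl

/-- `C(n, r) / B^r → c^r / r!` when `n → ∞` and `n / B → c`. -/
lemma tendsto_choose_div_pow (r : ℕ) (c : ℝ) (n : ℕ → ℕ) (B : ℕ → ℝ)
    (hn : Tendsto n atTop atTop) (hnB : Tendsto (fun m => (n m : ℝ) / B m) atTop (nhds c)) :
    Tendsto (fun m => ((n m).choose r : ℝ) / B m ^ r) atTop (nhds (c ^ r / r.factorial)) := by
  have h := (isEquivalent_choose r).comp_tendsto hn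
  have h2 : Asymptotics.IsEquivalent atTop (fun m => ((n m).choose r : ℝ) / B m ^ r)
      (fun m => ((n m : ℝ) / B m) ^ r / r.factorial) := by
    refine (h.div (Asymptotics.IsEquivalent.refl (u := fun m => B m ^ r))).congr_right ?_
    refine Eventually.of_forall fun m => ?_
    simp only [Function.comp, div_pow, Pi.div_apply]
    ring
  exact h2.symm.tendsto_nhds ((hnB.pow r).div_const _)



/-- fix `p ≥ 0` and reals `x, y > 0`.  If `(b_m)`, `(j_m)`, `(k_m)` are
sequences of positive integers with `b_m → ∞`, `j_m/b_m² → x` and `k_m/b_m → y`, then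
`b_m^{−(2p+1)}·C(2k_m+1+p, 2p+1)·C(2j_m−1, j_m+k_m)/C(2j_m−1, j_m+b_m)` converges to
`(2^{2p+1}/(2p+1)!)·y^{2p+1}·e^{(1−y²)/x}`. -/
theorem stmt9 (p : ℕ) (x y : ℝ) (hx : 0 < x) (hy : 0 < y)
    (b j k : ℕ → ℕ)
    (hb : ∀ m, 0 < b m) (hj : ∀ m, 0 < j m) (hk : ∀ m, 0 < k m)
    (hbtop : Tendsto (fun m => (b m : ℝ)) atTop atTop)
    (hjx : Tendsto (fun m => (j m : ℝ) / (b m : ℝ) ^ 2) atTop (nhds x))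
    (hky : Tendsto (fun m => (k m : ℝ) / (b m : ℝ)) atTop (nhds y)) :
    Tendsto
      (fun m => ((b m : ℝ) ^ (2 * p + 1))⁻¹ *
        ((2 * k m + 1 + p).choose (2 * p + 1) : ℝ) *
        ((2 * j m - 1).choose (j m + k m) : ℝ) /
        ((2 * j m - 1).choose (j m + b m) : ℝ))
      atTop
      (nhds ((2 ^ (2 * p + 1) / ((2 * p + 1).factorial : ℝ)) * y ^ (2 * p + 1) *
        Real.exp ((1 - y ^ 2) / x))) := by
  have hinv : Tendsto (fun m => ((b m : ℝ))⁻¹) atTop (nhds 0) := tendsto_inv_atTop_zero.comp hbtop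
  have hbne : ∀ m, (b m : ℝ) ≠ 0 := fun m => by exact_mod_cast (hb m).ne'
  have hbb : Tendsto (fun m => (b m : ℝ) / (b m : ℝ)) atTop (nhds 1) :=
    tendsto_const_nhds.congr fun m => (div_self (hbne m)).symm
  have hR := (tendsto_choose_ratio x y hx b j k hb hbtop hjx hky).div
    (tendsto_choose_ratio x 1 hx b j b hb hbtop hjx hbb) (Real.exp_ne_zero _)
  have hn2 : Tendsto (fun m => ((2 * k m + 1 + p : ℕ) : ℝ) / (b m : ℝ)) atTop (nhds (2 * y)) := by
    have h := (hky.const_mul 2).add (hinv.const_mul (1 + p : ℝ))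
    rw [mul_zero, add_zero] at h
    refine h.congr fun m => ?_
    have := hbne m
    push_cast
    field_simp
    ring
  have hn : Tendsto (fun m => 2 * k m + 1 + p) atTop atTop := by
    refine tendsto_natCast_atTop_iff (R := ℝ).1 ?_
    refine (hn2.pos_mul_atTop (by positivity) hbtop).congr fun m => ?_
    exact div_mul_cancel₀ _ (hbne m)
  have hP := tendsto_choose_div_pow (2 * p + 1) (2 * y) _ _ hn hn2
  have hlim := hP.mul hR
  have e : (2 * y) ^ (2 * p + 1) / ((2 * p + 1).factorial : ℝ) *
      (Real.exp (-(y ^ 2 / x)) / Real.exp (-(1 ^ 2 / x))) =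
      (2 ^ (2 * p + 1) / ((2 * p + 1).factorial : ℝ)) * y ^ (2 * p + 1) *
        Real.exp ((1 - y ^ 2) / x) := by
    rw [← Real.exp_sub, mul_pow]
    have e1 : -(y ^ 2 / x) - -(1 ^ 2 / x) = (1 - y ^ 2) / x := by ring
    rw [e1]
    ring
  rw [e] at hlim
  refine hlim.congr fun m => ?_
  have hc : ((2 * j m - 1).choose (j m) : ℝ) ≠ 0 := by
    have := hj m
    exact_mod_cast (Nat.choose_pos (by omega)).ne'
  simp only [Pi.div_apply]
  rw [div_div_div_cancel_right₀ hc]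
  ring
end
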